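/- arXiv:1205.3612 — 3 statements merged into one kernel-verified Lean document; each statement's English description precedes it below -/
import Mathlib

section
/- Untyping theorem for strict semiring equality: if the untyped strict equality ⊢ a =⁺ b is derivable and both a : n→m and b : n→m are derivable in environment Γ, then the typed strict equality a =⁺ b : n→m is derivable in Γ. -/
/-- Terms over the signature {·₂, +₂, 1₀, 0₀}. -/
inductive SRTerm (X : Type) : Type where
  | var : X → SRTerm X
  | one : SRTerm X
  | zero : SRTerm X
  | mul : SRTerm X → SRTerm X → SRTerm X
  | add : SRTerm X → SRTerm X → SRTerm X

/-- Typing judgement for typed semirings, in environment `Γ`. -/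
inductive SRTyp {X T : Type} (Γ : X → T × T) : SRTerm X → T → T → Prop where
  | var (x : X) (n m : T) : Γ x = (n, m) → SRTyp Γ (.var x) n m
  | one (n : T) : SRTyp Γ .one n n
  | zero (n m : T) : SRTyp Γ .zero n m
  | mul {a b : SRTerm X} {n m p : T} :
      SRTyp Γ a n m → SRTyp Γ b m p → SRTyp Γ (.mul a b) n p
  | add {a b : SRTerm X} {n m : T} :
      SRTyp Γ a n m → SRTyp Γ b n m → SRTyp Γ (.add a b) n m

/-- `⌊a⌋`: the normal form of `a` for the convergent rewriting system
`a+0 → a`, `0+a → a`, `0·a → 0`, `a·0 → 0`. -/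
def SRTerm.norm {X : Type} : SRTerm X → SRTerm X
  | .var x => .var x
  | .one => .one
  | .zero => .zero
  | .mul a b =>
    match a.norm, b.norm with
    | .zero, _ => .zero
    | _, .zero => .zero
    | a', b' => .mul a' b'
  | .add a b =>
    match a.norm, b.norm with
    | .zero, b' => b'
    | a', .zero => a'
    | a', b' => .add a' b'

/-- Strict typed equality judgement `a =⁺ b : n→m` for typed semirings: the semiring
equality judgement without the annihilation rules, and with the two distributivity
rules restricted to strict factors. -/
inductive SREqS {X T : Type} (Γ : X → T × T) : SRTerm X → SRTerm X → T → T → Prop where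
  | var (x : X) (n m : T) : Γ x = (n, m) → SREqS Γ (.var x) (.var x) n m
  | symm {a b : SRTerm X} {n m : T} : SREqS Γ a b n m → SREqS Γ b a n m
  | trans {a b c : SRTerm X} {n m : T} :
      SREqS Γ a b n m → SREqS Γ b c n m → SREqS Γ a c n m
  | one (n : T) : SREqS Γ .one .one n n
  | zero (n m : T) : SREqS Γ .zero .zero n m
  | mul {a a' b b' : SRTerm X} {n m p : T} :
      SREqS Γ a a' n m → SREqS Γ b b' m p → SREqS Γ (.mul a b) (.mul a' b') n p
  | add {a a' b b' : SRTerm X} {n m : T} :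
      SREqS Γ a a' n m → SREqS Γ b b' n m → SREqS Γ (.add a b) (.add a' b') n m
  | one_mul {a : SRTerm X} {n m : T} : SRTyp Γ a n m → SREqS Γ (.mul .one a) a n m
  | mul_one {a : SRTerm X} {n m : T} : SRTyp Γ a n m → SREqS Γ (.mul a .one) a n m
  | mul_assoc {a b c : SRTerm X} {n m p q : T} :
      SRTyp Γ a n m → SRTyp Γ b m p → SRTyp Γ c p q →
      SREqS Γ (.mul (.mul a b) c) (.mul a (.mul b c)) n q
  | add_zero {a : SRTerm X} {n m : T} : SRTyp Γ a n m → SREqS Γ (.add a .zero) a n m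
  | add_comm {a b : SRTerm X} {n m : T} :
      SRTyp Γ a n m → SRTyp Γ b n m → SREqS Γ (.add a b) (.add b a) n m
  | add_assoc {a b c : SRTerm X} {n m : T} :
      SRTyp Γ a n m → SRTyp Γ b n m → SRTyp Γ c n m →
      SREqS Γ (.add (.add a b) c) (.add a (.add b c)) n m
  | mul_add {a b c : SRTerm X} {n m p : T} :
      SRTyp Γ a n m → SRTyp Γ b m p → SRTyp Γ c m p → a.norm ≠ .zero →
      SREqS Γ (.mul a (.add b c)) (.add (.mul a b) (.mul a c)) n p
  | add_mul {a b c : SRTerm X} {n m p : T} :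
      SRTyp Γ a n m → SRTyp Γ b p n → SRTyp Γ c p n → a.norm ≠ .zero →
      SREqS Γ (.mul (.add b c) a) (.add (.mul b a) (.mul c a)) p m

theorem srtyp_norm_mul {X : Type} {a b : SRTerm X} (h : (SRTerm.mul a b).norm ≠ .zero) :
    a.norm ≠ .zero ∧ b.norm ≠ .zero := by
  constructor
  · intro ha
    apply h
    simp [SRTerm.norm, ha]
  · intro hb
    apply h
    simp only [SRTerm.norm, hb]
    split <;> simp_all

theorem srtyp_norm_add {X : Type} {a b : SRTerm X} (h : (SRTerm.add a b).norm ≠ .zero) :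
    a.norm ≠ .zero ∨ b.norm ≠ .zero := by
  by_contra hc
  push Not at hc
  apply h
  simp [SRTerm.norm, hc.1, hc.2]

/-- A strict term has functional and injective typing. -/
theorem srtyp_strict {X T : Type} {Γ : X → T × T} {a : SRTerm X} {n m : T}
    (h : SRTyp Γ a n m) : a.norm ≠ .zero → ∀ n' m', SRTyp Γ a n' m' → (n = n' ↔ m = m') := by
  induction h with
  | var x n m hx =>
    intro _ n' m' h'
    cases h' with
    | var _ _ _ hy =>
      rw [hx] at hy
      cases hy
      simp
  | one n =>
    intro _ n' m' h'
    cases h'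
    rfl
  | zero n m =>
    intro hs
    exact absurd rfl hs
  | mul _ _ iha ihb =>
    intro hs n' m' h'
    obtain ⟨h1, h2⟩ := srtyp_norm_mul hs
    cases h' with
    | mul ha hb => exact (iha h1 _ _ ha).trans (ihb h2 _ _ hb)
  | add _ _ iha ihb =>
    intro hs n' m' h'
    cases h' with
    | add ha hb =>
      rcases srtyp_norm_add hs with h1 | h1
      · exact iha h1 _ _ ha
      · exact ihb h1 _ _ hb

theorem sreqs_refl {X T : Type} {Γ : X → T × T} {a : SRTerm X} {n m : T}
    (h : SRTyp Γ a n m) : SREqS Γ a a n m := by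
  induction h with
  | var x n m hx => exact .var x n m hx
  | one n => exact .one n
  | zero n m => exact .zero n m
  | mul _ _ iha ihb => exact .mul iha ihb
  | add _ _ iha ihb => exact .add iha ihb

theorem sreqs_typ {X T : Type} {Γ : X → T × T} {a b : SRTerm X} {n m : T}
    (h : SREqS Γ a b n m) : SRTyp Γ a n m ∧ SRTyp Γ b n m := by
  induction h with
  | var x n m hx => exact ⟨.var x n m hx, .var x n m hx⟩
  | symm _ ih => exact ⟨ih.2, ih.1⟩
  | trans _ _ ih1 ih2 => exact ⟨ih1.1, ih2.2⟩
  | one n => exact ⟨.one n, .one n⟩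
  | zero n m => exact ⟨.zero n m, .zero n m⟩
  | mul _ _ ih1 ih2 => exact ⟨.mul ih1.1 ih2.1, .mul ih1.2 ih2.2⟩
  | add _ _ ih1 ih2 => exact ⟨.add ih1.1 ih2.1, .add ih1.2 ih2.2⟩
  | one_mul h => exact ⟨.mul (.one _) h, h⟩
  | mul_one h => exact ⟨.mul h (.one _), h⟩
  | mul_assoc h1 h2 h3 => exact ⟨.mul (.mul h1 h2) h3, .mul h1 (.mul h2 h3)⟩
  | add_zero h => exact ⟨.add h (.zero _ _), h⟩
  | add_comm h1 h2 => exact ⟨.add h1 h2, .add h2 h1⟩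
  | add_assoc h1 h2 h3 => exact ⟨.add (.add h1 h2) h3, .add h1 (.add h2 h3)⟩
  | mul_add h1 h2 h3 _ => exact ⟨.mul h1 (.add h2 h3), .add (.mul h1 h2) (.mul h1 h3)⟩
  | add_mul h1 h2 h3 _ => exact ⟨.mul (.add h2 h3) h1, .add (.mul h2 h1) (.mul h3 h1)⟩

/-- Strict equality preserves typing in both directions, and can be retyped. -/
theorem sreqs_retype {X T U : Type} {Δ : X → U × U} (Γ : X → T × T) {a b : SRTerm X} {u v : U}
    (h : SREqS Δ a b u v) : ∀ n m, SRTyp Γ a n m ∨ SRTyp Γ b n m → SREqS Γ a b n m := by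
  induction h with
  | var x => intro n m h; exact sreqs_refl (h.elim id id)
  | one => intro n m h; exact sreqs_refl (h.elim id id)
  | zero => intro n m h; exact sreqs_refl (h.elim id id)
  | symm _ ih => intro n m h; exact .symm (ih n m h.symm)
  | trans _ _ ih1 ih2 =>
    rintro n m (h | h)
    · have e := ih1 n m (.inl h)
      exact .trans e (ih2 n m (.inl (sreqs_typ e).2))
    · have e := ih2 n m (.inr h)
      exact .trans (ih1 n m (.inr (sreqs_typ e).1)) e
  | mul _ _ ih1 ih2 =>
    rintro n m (h | h)
    · cases h with | mul ha hb => exact .mul (ih1 _ _ (.inl ha)) (ih2 _ _ (.inl hb))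
    · cases h with | mul ha hb => exact .mul (ih1 _ _ (.inr ha)) (ih2 _ _ (.inr hb))
  | add _ _ ih1 ih2 =>
    rintro n m (h | h)
    · cases h with | add ha hb => exact .add (ih1 _ _ (.inl ha)) (ih2 _ _ (.inl hb))
    · cases h with | add ha hb => exact .add (ih1 _ _ (.inr ha)) (ih2 _ _ (.inr hb))
  | one_mul _ =>
    rintro n m (h | h)
    · cases h with | mul ha hb => cases ha; exact .one_mul hb
    · exact .one_mul h
  | mul_one _ =>
    rintro n m (h | h)
    · cases h with | mul ha hb => cases hb; exact .mul_one ha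
    · exact .mul_one h
  | mul_assoc _ _ _ =>
    rintro n m (h | h)
    · cases h with | mul ha hb => cases ha with | mul h1 h2 => exact .mul_assoc h1 h2 hb
    · cases h with | mul ha hb => cases hb with | mul h1 h2 => exact .mul_assoc ha h1 h2
  | add_zero _ =>
    rintro n m (h | h)
    · cases h with | add ha hb => exact .add_zero ha
    · exact .add_zero h
  | add_comm _ _ =>
    rintro n m (h | h)
    · cases h with | add ha hb => exact .add_comm ha hb
    · cases h with | add ha hb => exact .add_comm hb ha
  | add_assoc _ _ _ =>
    rintro n m (h | h)
    · cases h with | add ha hb => cases ha with | add h1 h2 => exact .add_assoc h1 h2 hb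
    · cases h with | add ha hb => cases hb with | add h1 h2 => exact .add_assoc ha h1 h2
  | mul_add _ _ _ hs =>
    rintro n m (h | h)
    · cases h with | mul ha hb => cases hb with | add h1 h2 => exact .mul_add ha h1 h2 hs
    · cases h with
      | add h1 h2 =>
        cases h1 with
        | mul ha hb =>
          cases h2 with
          | mul ha' hc =>
            obtain rfl := (srtyp_strict ha hs _ _ ha').1 rfl
            exact .mul_add ha hb hc hs
  | add_mul _ _ _ hs =>
    rintro n m (h | h)
    · cases h with | mul hb ha => cases hb with | add h1 h2 => exact .add_mul ha h1 h2 hs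
    · cases h with
      | add h1 h2 =>
        cases h1 with
        | mul hb ha =>
          cases h2 with
          | mul hc ha' =>
            obtain rfl := (srtyp_strict ha hs _ _ ha').2 rfl
            exact .add_mul ha hb hc hs

/-- Untyping theorem for strict semiring equality: if the untyped strict equality
`⊢ a =⁺ b` is derivable (i.e. the strict equality over the singleton set of objects)
and both `a : n→m` and `b : n→m` are derivable in environment `Γ`, then the typed
strict equality `a =⁺ b : n→m` is derivable in `Γ`. -/
theorem semiring_strict_untyping {X T : Type} (Γ : X → T × T)
    (a b : SRTerm X) (n m : T) :
    SREqS (fun _ : X => ((), ())) a b () () →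
    SRTyp Γ a n m → SRTyp Γ b n m →
    SREqS Γ a b n m := by
  intro h ha _
  exact sreqs_retype Γ h n m (.inl ha)
end

section
/- Factorisation for semirings: if the untyped semiring equality ⊢ a = b is derivable, then the untyped strict equality ⊢ ⌊a⌋ =⁺ ⌊b⌋ of the normal forms is derivable. -/
/-- Typed equality judgement for typed semirings, in environment `Γ`. -/
inductive SREq {X T : Type} (Γ : X → T × T) : SRTerm X → SRTerm X → T → T → Prop where
  | var (x : X) (n m : T) : Γ x = (n, m) → SREq Γ (.var x) (.var x) n m
  | symm {a b : SRTerm X} {n m : T} : SREq Γ a b n m → SREq Γ b a n m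
  | trans {a b c : SRTerm X} {n m : T} :
      SREq Γ a b n m → SREq Γ b c n m → SREq Γ a c n m
  | one (n : T) : SREq Γ .one .one n n
  | zero (n m : T) : SREq Γ .zero .zero n m
  | mul {a a' b b' : SRTerm X} {n m p : T} :
      SREq Γ a a' n m → SREq Γ b b' m p → SREq Γ (.mul a b) (.mul a' b') n p
  | add {a a' b b' : SRTerm X} {n m : T} :
      SREq Γ a a' n m → SREq Γ b b' n m → SREq Γ (.add a b) (.add a' b') n m
  | one_mul {a : SRTerm X} {n m : T} : SRTyp Γ a n m → SREq Γ (.mul .one a) a n m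
  | mul_one {a : SRTerm X} {n m : T} : SRTyp Γ a n m → SREq Γ (.mul a .one) a n m
  | mul_assoc {a b c : SRTerm X} {n m p q : T} :
      SRTyp Γ a n m → SRTyp Γ b m p → SRTyp Γ c p q →
      SREq Γ (.mul (.mul a b) c) (.mul a (.mul b c)) n q
  | add_zero {a : SRTerm X} {n m : T} : SRTyp Γ a n m → SREq Γ (.add a .zero) a n m
  | add_comm {a b : SRTerm X} {n m : T} :
      SRTyp Γ a n m → SRTyp Γ b n m → SREq Γ (.add a b) (.add b a) n m
  | add_assoc {a b c : SRTerm X} {n m : T} :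
      SRTyp Γ a n m → SRTyp Γ b n m → SRTyp Γ c n m →
      SREq Γ (.add (.add a b) c) (.add a (.add b c)) n m
  | mul_add {a b c : SRTerm X} {n m p : T} :
      SRTyp Γ a n m → SRTyp Γ b m p → SRTyp Γ c m p →
      SREq Γ (.mul a (.add b c)) (.add (.mul a b) (.mul a c)) n p
  | add_mul {a b c : SRTerm X} {n m p : T} :
      SRTyp Γ a n m → SRTyp Γ b p n → SRTyp Γ c p n →
      SREq Γ (.mul (.add b c) a) (.add (.mul b a) (.mul c a)) p m
  | mul_zero {a : SRTerm X} {n m p : T} : SRTyp Γ a n m → SREq Γ (.mul a .zero) .zero n p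
  | zero_mul {a : SRTerm X} {n m p : T} : SRTyp Γ a n m → SREq Γ (.mul .zero a) .zero p m

theorem SRTerm.norm_mul_zero_left {X : Type} {a b : SRTerm X} (h : a.norm = .zero) :
    (SRTerm.mul a b).norm = .zero := by
  simp [SRTerm.norm, h]

theorem SRTerm.norm_mul_zero_right {X : Type} {a b : SRTerm X} (h : b.norm = .zero) :
    (SRTerm.mul a b).norm = .zero := by
  rw [SRTerm.norm, h]; cases a.norm <;> rfl

theorem SRTerm.norm_mul_ne {X : Type} {a b : SRTerm X} (h : a.norm ≠ .zero)
    (h' : b.norm ≠ .zero) : (SRTerm.mul a b).norm = .mul a.norm b.norm := by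
  rw [SRTerm.norm]
  generalize a.norm = x at *
  generalize b.norm = y at *
  cases x <;> cases y <;> first | rfl | exact absurd rfl h | exact absurd rfl h'

theorem SRTerm.norm_add_zero_left {X : Type} {a b : SRTerm X} (h : a.norm = .zero) :
    (SRTerm.add a b).norm = b.norm := by
  simp [SRTerm.norm, h]

theorem SRTerm.norm_add_zero_right {X : Type} {a b : SRTerm X} (h : b.norm = .zero) :
    (SRTerm.add a b).norm = a.norm := by
  rw [SRTerm.norm, h]; cases a.norm <;> rfl

theorem SRTerm.norm_add_ne {X : Type} {a b : SRTerm X} (h : a.norm ≠ .zero)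
    (h' : b.norm ≠ .zero) : (SRTerm.add a b).norm = .add a.norm b.norm := by
  rw [SRTerm.norm]
  generalize a.norm = x at *
  generalize b.norm = y at *
  cases x <;> cases y <;> first | rfl | exact absurd rfl h | exact absurd rfl h'

theorem SRTerm.norm_norm {X : Type} (a : SRTerm X) : a.norm.norm = a.norm := by
  induction a with
  | var x => rfl
  | one => rfl
  | zero => rfl
  | mul a b iha ihb =>
    by_cases h : a.norm = .zero
    · rw [norm_mul_zero_left h]; rfl
    by_cases h' : b.norm = .zero
    · rw [norm_mul_zero_right h']; rfl
    rw [norm_mul_ne h h', norm_mul_ne (by rwa [iha]) (by rwa [ihb]), iha, ihb]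
  | add a b iha ihb =>
    by_cases h : a.norm = .zero
    · rwa [norm_add_zero_left h]
    by_cases h' : b.norm = .zero
    · rwa [norm_add_zero_right h']
    rw [norm_add_ne h h', norm_add_ne (by rwa [iha]) (by rwa [ihb]), iha, ihb]

theorem SRTerm.norm_mul_congr {X : Type} {a b a' b' : SRTerm X} (h : a.norm = a'.norm)
    (h' : b.norm = b'.norm) : (SRTerm.mul a b).norm = (SRTerm.mul a' b').norm := by
  rw [SRTerm.norm, SRTerm.norm, h, h']

theorem SRTerm.norm_add_congr {X : Type} {a b a' b' : SRTerm X} (h : a.norm = a'.norm)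
    (h' : b.norm = b'.norm) : (SRTerm.add a b).norm = (SRTerm.add a' b').norm := by
  rw [SRTerm.norm, SRTerm.norm, h, h']

theorem SRTyp.untyped {X : Type} (a : SRTerm X) (n m : Unit) :
    SRTyp (fun _ : X => ((), ())) a n m := by
  induction a with
  | var x => exact .var x _ _ rfl
  | one => exact .one _
  | zero => exact .zero _ _
  | mul a b iha ihb => exact .mul iha ihb
  | add a b iha ihb => exact .add iha ihb

theorem SREqS.rfl_untyped {X : Type} (a : SRTerm X) (n m : Unit) :
    SREqS (fun _ : X => ((), ())) a a n m :=
  (SREqS.add_zero (SRTyp.untyped a n m)).symm.trans (SREqS.add_zero (SRTyp.untyped a n m))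

open SRTerm in
theorem semiring_factorisation_aux {X : Type} {a b : SRTerm X} {n m : Unit}
    (h : SREq (fun _ : X => ((), ())) a b n m) :
    (a.norm = .zero ↔ b.norm = .zero) ∧
    SREqS (fun _ : X => ((), ())) a.norm b.norm n m := by
  have R := @SREqS.rfl_untyped X
  have T := @SRTyp.untyped X
  induction h with
  | var x n m h => exact ⟨Iff.rfl, R _ _ _⟩
  | symm _ ih => exact ⟨ih.1.symm, ih.2.symm⟩
  | trans _ _ ih ih' => exact ⟨ih.1.trans ih'.1, ih.2.trans ih'.2⟩
  | one => exact ⟨Iff.rfl, R _ _ _⟩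
  | zero => exact ⟨Iff.rfl, R _ _ _⟩
  | @mul a a' b b' n m p _ _ ih ih' =>
    by_cases h : a.norm = .zero
    · rw [norm_mul_zero_left h, norm_mul_zero_left (ih.1.1 h)]; exact ⟨Iff.rfl, R _ _ _⟩
    by_cases h' : b.norm = .zero
    · rw [norm_mul_zero_right h', norm_mul_zero_right (ih'.1.1 h')]; exact ⟨Iff.rfl, R _ _ _⟩
    rw [norm_mul_ne h h', norm_mul_ne (mt ih.1.2 h) (mt ih'.1.2 h')]
    exact ⟨by simp, .mul ih.2 ih'.2⟩
  | @add a a' b b' n m _ _ ih ih' =>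
    by_cases h : a.norm = .zero
    · rw [norm_add_zero_left h, norm_add_zero_left (ih.1.1 h)]; exact ih'
    by_cases h' : b.norm = .zero
    · rw [norm_add_zero_right h', norm_add_zero_right (ih'.1.1 h')]; exact ih
    rw [norm_add_ne h h', norm_add_ne (mt ih.1.2 h) (mt ih'.1.2 h')]
    exact ⟨by simp, .add ih.2 ih'.2⟩
  | @one_mul a n m _ =>
    by_cases h : a.norm = .zero
    · rw [norm_mul_zero_right h, h]; exact ⟨Iff.rfl, R _ _ _⟩
    rw [norm_mul_ne (by simp [SRTerm.norm]) h]
    exact ⟨by simp [h], .one_mul (T _ _ _)⟩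
  | @mul_one a n m _ =>
    by_cases h : a.norm = .zero
    · rw [norm_mul_zero_left h, h]; exact ⟨Iff.rfl, R _ _ _⟩
    rw [norm_mul_ne h (by simp [SRTerm.norm])]
    exact ⟨by simp [h], .mul_one (T _ _ _)⟩
  | @mul_assoc a b c n m p q _ _ _ =>
    by_cases ha : a.norm = .zero
    · rw [norm_mul_zero_left ha, norm_mul_zero_left (norm_mul_zero_left ha)]
      exact ⟨Iff.rfl, R _ _ _⟩
    by_cases hb : b.norm = .zero
    · rw [norm_mul_zero_left (norm_mul_zero_right hb), norm_mul_zero_right (norm_mul_zero_left hb)]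
      exact ⟨Iff.rfl, R _ _ _⟩
    by_cases hc : c.norm = .zero
    · rw [norm_mul_zero_right hc, norm_mul_zero_right (norm_mul_zero_right hc)]
      exact ⟨Iff.rfl, R _ _ _⟩
    have h1 := norm_mul_ne ha hb
    have h2 := norm_mul_ne hb hc
    rw [norm_mul_ne (a := mul a b) (by simp [h1]) hc,
      norm_mul_ne (b := mul b c) ha (by simp [h2]), h1, h2]
    exact ⟨by simp, .mul_assoc (T _ _ ()) (T _ _ ()) (T _ _ _)⟩
  | @add_zero a n m _ =>
    rw [norm_add_zero_right rfl]; exact ⟨Iff.rfl, R _ _ _⟩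
  | @add_comm a b n m _ _ =>
    by_cases ha : a.norm = .zero
    · rw [norm_add_zero_left ha, norm_add_zero_right ha]; exact ⟨Iff.rfl, R _ _ _⟩
    by_cases hb : b.norm = .zero
    · rw [norm_add_zero_left hb, norm_add_zero_right hb]; exact ⟨Iff.rfl, R _ _ _⟩
    rw [norm_add_ne ha hb, norm_add_ne hb ha]
    exact ⟨by simp, .add_comm (T _ _ _) (T _ _ _)⟩
  | @add_assoc a b c n m _ _ _ =>
    by_cases ha : a.norm = .zero
    · have : (add (add a b) c).norm = (add a (add b c)).norm := by
        rw [norm_add_zero_left ha]; exact norm_add_congr (norm_add_zero_left ha) rfl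
      rw [this]; exact ⟨Iff.rfl, R _ _ _⟩
    by_cases hb : b.norm = .zero
    · have : (add (add a b) c).norm = (add a (add b c)).norm := by
        exact (norm_add_congr (norm_add_zero_right hb) rfl).trans
          (norm_add_congr rfl (norm_add_zero_left hb).symm)
      rw [this]; exact ⟨Iff.rfl, R _ _ _⟩
    by_cases hc : c.norm = .zero
    · have : (add (add a b) c).norm = (add a (add b c)).norm := by
        rw [norm_add_zero_right hc]
        exact norm_add_congr rfl (norm_add_zero_right hc).symm
      rw [this]; exact ⟨Iff.rfl, R _ _ _⟩
    have h1 := norm_add_ne ha hb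
    have h2 := norm_add_ne hb hc
    rw [norm_add_ne (a := add a b) (by simp [h1]) hc,
      norm_add_ne (b := add b c) ha (by simp [h2]), h1, h2]
    exact ⟨by simp, .add_assoc (T _ _ _) (T _ _ _) (T _ _ _)⟩
  | @mul_add a b c n m p _ _ _ =>
    by_cases ha : a.norm = .zero
    · rw [norm_mul_zero_left ha, norm_add_zero_left (norm_mul_zero_left ha),
        norm_mul_zero_left ha]
      exact ⟨Iff.rfl, R _ _ _⟩
    by_cases hb : b.norm = .zero
    · have : (mul a (add b c)).norm = (add (mul a b) (mul a c)).norm := by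
        rw [norm_add_zero_left (norm_mul_zero_right hb)]
        exact norm_mul_congr rfl (norm_add_zero_left hb)
      rw [this]; exact ⟨Iff.rfl, R _ _ _⟩
    by_cases hc : c.norm = .zero
    · have : (mul a (add b c)).norm = (add (mul a b) (mul a c)).norm := by
        rw [norm_add_zero_right (norm_mul_zero_right hc)]
        exact norm_mul_congr rfl (norm_add_zero_right hc)
      rw [this]; exact ⟨Iff.rfl, R _ _ _⟩
    have h0 := norm_add_ne hb hc
    have h1 := norm_mul_ne ha hb
    have h2 := norm_mul_ne ha hc
    rw [norm_mul_ne (b := add b c) ha (by simp [h0]),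
      norm_add_ne (a := mul a b) (b := mul a c) (by simp [h1]) (by simp [h2]), h0, h1, h2]
    exact ⟨by simp, .mul_add (T _ _ ()) (T _ _ _) (T _ _ _) (by rwa [norm_norm])⟩
  | @add_mul a b c n m p _ _ _ =>
    by_cases ha : a.norm = .zero
    · rw [norm_mul_zero_right ha, norm_add_zero_left (norm_mul_zero_right ha),
        norm_mul_zero_right ha]
      exact ⟨Iff.rfl, R _ _ _⟩
    by_cases hb : b.norm = .zero
    · have : (mul (add b c) a).norm = (add (mul b a) (mul c a)).norm := by
        rw [norm_add_zero_left (norm_mul_zero_left hb)]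
        exact norm_mul_congr (norm_add_zero_left hb) rfl
      rw [this]; exact ⟨Iff.rfl, R _ _ _⟩
    by_cases hc : c.norm = .zero
    · have : (mul (add b c) a).norm = (add (mul b a) (mul c a)).norm := by
        rw [norm_add_zero_right (norm_mul_zero_left hc)]
        exact norm_mul_congr (norm_add_zero_right hc) rfl
      rw [this]; exact ⟨Iff.rfl, R _ _ _⟩
    have h0 := norm_add_ne hb hc
    have h1 := norm_mul_ne hb ha
    have h2 := norm_mul_ne hc ha
    rw [norm_mul_ne (a := add b c) (by simp [h0]) ha,
      norm_add_ne (a := mul b a) (b := mul c a) (by simp [h1]) (by simp [h2]), h0, h1, h2]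
    exact ⟨by simp, .add_mul (T _ () _) (T _ _ _) (T _ _ _) (by rwa [norm_norm])⟩
  | mul_zero _ => rw [norm_mul_zero_right rfl]; exact ⟨Iff.rfl, R _ _ _⟩
  | zero_mul _ => rw [norm_mul_zero_left rfl]; exact ⟨Iff.rfl, R _ _ _⟩

/-- Factorisation for semirings: if the untyped semiring equality `⊢ a = b` is
derivable (i.e. the semiring equality over the singleton set of objects), then the
untyped strict equality `⊢ ⌊a⌋ =⁺ ⌊b⌋` of the normal forms is derivable. -/
theorem semiring_factorisation {X : Type} (a b : SRTerm X) :
    SREq (fun _ : X => ((), ())) a b () () →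
    SREqS (fun _ : X => ((), ())) a.norm b.norm () () := by
  exact fun h => (semiring_factorisation_aux h).2
end

section
/- In typed Kleene algebras, if the untyped strict equality ⊢ a =⁺ b is derivable, then for all objects n,m, a : n→m is derivable if and only if b : n→m is derivable. -/
/-- Terms over the signature {·₂, +₂, *₁, 1₀, 0₀}. -/
inductive KTerm (X : Type) : Type where
  | var : X → KTerm X
  | one : KTerm X
  | zero : KTerm X
  | mul : KTerm X → KTerm X → KTerm X
  | add : KTerm X → KTerm X → KTerm X
  | star : KTerm X → KTerm X

/-- Typing judgement for typed Kleene algebras, in environment `Γ`. -/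
inductive KTyp {X T : Type} (Γ : X → T × T) : KTerm X → T → T → Prop where
  | var (x : X) (n m : T) : Γ x = (n, m) → KTyp Γ (.var x) n m
  | one (n : T) : KTyp Γ .one n n
  | zero (n m : T) : KTyp Γ .zero n m
  | mul {a b : KTerm X} {n m p : T} :
      KTyp Γ a n m → KTyp Γ b m p → KTyp Γ (.mul a b) n p
  | add {a b : KTerm X} {n m : T} :
      KTyp Γ a n m → KTyp Γ b n m → KTyp Γ (.add a b) n m
  | star {a : KTerm X} {n : T} : KTyp Γ a n n → KTyp Γ (.star a) n n

/-- `⌊a⌋`: the normal form of `a` for the convergent rewriting system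
`a+0 → a`, `0+a → a`, `0·a → 0`, `a·0 → 0`, `0* → 1`. -/
def KTerm.norm {X : Type} : KTerm X → KTerm X
  | .var x => .var x
  | .one => .one
  | .zero => .zero
  | .mul a b =>
    match a.norm, b.norm with
    | .zero, _ => .zero
    | _, .zero => .zero
    | a', b' => .mul a' b'
  | .add a b =>
    match a.norm, b.norm with
    | .zero, b' => b'
    | a', .zero => a'
    | a', b' => .add a' b'
  | .star a =>
    match a.norm with
    | .zero => .one
    | a' => .star a'

/-- Strict typed equality judgement `a =⁺ b : n→m` for typed Kleene algebras: the
Kleene algebra equality judgement without the annihilation rules, with the two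
distributivity rules restricted to strict factors, and with the two star induction
rules restricted to strict `b`. `a ≤ b : n→m` abbreviates `a+b = b : n→m`. -/
inductive KEqS {X T : Type} (Γ : X → T × T) : KTerm X → KTerm X → T → T → Prop where
  | var (x : X) (n m : T) : Γ x = (n, m) → KEqS Γ (.var x) (.var x) n m
  | symm {a b : KTerm X} {n m : T} : KEqS Γ a b n m → KEqS Γ b a n m
  | trans {a b c : KTerm X} {n m : T} :
      KEqS Γ a b n m → KEqS Γ b c n m → KEqS Γ a c n m
  | one (n : T) : KEqS Γ .one .one n n
  | zero (n m : T) : KEqS Γ .zero .zero n m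
  | mul {a a' b b' : KTerm X} {n m p : T} :
      KEqS Γ a a' n m → KEqS Γ b b' m p → KEqS Γ (.mul a b) (.mul a' b') n p
  | add {a a' b b' : KTerm X} {n m : T} :
      KEqS Γ a a' n m → KEqS Γ b b' n m → KEqS Γ (.add a b) (.add a' b') n m
  | star {a b : KTerm X} {n : T} : KEqS Γ a b n n → KEqS Γ (.star a) (.star b) n n
  | one_mul {a : KTerm X} {n m : T} : KTyp Γ a n m → KEqS Γ (.mul .one a) a n m
  | mul_one {a : KTerm X} {n m : T} : KTyp Γ a n m → KEqS Γ (.mul a .one) a n m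
  | mul_assoc {a b c : KTerm X} {n m p q : T} :
      KTyp Γ a n m → KTyp Γ b m p → KTyp Γ c p q →
      KEqS Γ (.mul (.mul a b) c) (.mul a (.mul b c)) n q
  | add_zero {a : KTerm X} {n m : T} : KTyp Γ a n m → KEqS Γ (.add a .zero) a n m
  | add_comm {a b : KTerm X} {n m : T} :
      KTyp Γ a n m → KTyp Γ b n m → KEqS Γ (.add a b) (.add b a) n m
  | add_assoc {a b c : KTerm X} {n m : T} :
      KTyp Γ a n m → KTyp Γ b n m → KTyp Γ c n m →
      KEqS Γ (.add (.add a b) c) (.add a (.add b c)) n m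
  | mul_add {a b c : KTerm X} {n m p : T} :
      KTyp Γ a n m → KTyp Γ b m p → KTyp Γ c m p → a.norm ≠ .zero →
      KEqS Γ (.mul a (.add b c)) (.add (.mul a b) (.mul a c)) n p
  | add_mul {a b c : KTerm X} {n m p : T} :
      KTyp Γ a n m → KTyp Γ b p n → KTyp Γ c p n → a.norm ≠ .zero →
      KEqS Γ (.mul (.add b c) a) (.add (.mul b a) (.mul c a)) p m
  | add_idem {a : KTerm X} {n m : T} : KTyp Γ a n m → KEqS Γ (.add a a) a n m
  | star_unfold {a : KTerm X} {n : T} :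
      KTyp Γ a n n → KEqS Γ (.add .one (.mul a (.star a))) (.star a) n n
  | star_ind_l {a b : KTerm X} {n m : T} :
      KEqS Γ (.add (.mul a b) b) b n m → b.norm ≠ .zero →
      KEqS Γ (.add (.mul (.star a) b) b) b n m
  | star_ind_r {a b : KTerm X} {n m : T} :
      KEqS Γ (.add (.mul b a) b) b n m → b.norm ≠ .zero →
      KEqS Γ (.add (.mul b (.star a)) b) b n m

theorem KTerm.norm_mul_strict {X : Type} {a b : KTerm X} (h : (KTerm.mul a b).norm ≠ .zero) :
    a.norm ≠ .zero ∧ b.norm ≠ .zero := by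
  constructor
  · intro ha
    apply h
    simp [KTerm.norm, ha]
  · intro hb
    apply h
    simp only [KTerm.norm, hb]
    cases a.norm <;> rfl

theorem KTerm.norm_add_strict {X : Type} {a b : KTerm X} (h : (KTerm.add a b).norm ≠ .zero) :
    a.norm ≠ .zero ∨ b.norm ≠ .zero := by
  by_contra hc
  push Not at hc
  apply h
  simp [KTerm.norm, hc.1, hc.2]

/-- Types of strict terms are determined by either end. -/
theorem KTyp.strict_inj {X T : Type} {Γ : X → T × T} {a : KTerm X} {n m : T}
    (h : KTyp Γ a n m) : ∀ {n' m' : T}, KTyp Γ a n' m' → a.norm ≠ .zero → (n = n' ↔ m = m') := by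
  induction h with
  | var x n m e =>
    intro n' m' h' hs
    cases h' with
    | var _ _ _ e' =>
      rw [e] at e'
      simp only [Prod.mk.injEq] at e'
      exact ⟨fun _ => e'.2, fun _ => e'.1⟩
  | one n => intro n' m' h' _; cases h'; exact Iff.rfl
  | zero n m => intro n' m' _ hs; exact absurd rfl hs
  | mul _ _ iha ihb =>
    intro n' m' h' hs
    obtain ⟨ha, hb⟩ := KTerm.norm_mul_strict hs
    cases h' with
    | mul h1 h2 => exact (iha h1 ha).trans (ihb h2 hb)
  | add _ _ iha ihb =>
    intro n' m' h' hs
    cases h' with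
    | add h1 h2 =>
      rcases KTerm.norm_add_strict hs with h | h
      · exact iha h1 h
      · exact ihb h2 h
  | star _ _ => intro n' m' h' _; cases h'; exact Iff.rfl

theorem KTyp.mul_iff {X T : Type} {Γ : X → T × T} {a b : KTerm X} {n m : T} :
    KTyp Γ (.mul a b) n m ↔ ∃ k, KTyp Γ a n k ∧ KTyp Γ b k m :=
  ⟨fun h => by cases h with | mul h1 h2 => exact ⟨_, h1, h2⟩, fun ⟨_, h1, h2⟩ => .mul h1 h2⟩

theorem KTyp.add_iff {X T : Type} {Γ : X → T × T} {a b : KTerm X} {n m : T} :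
    KTyp Γ (.add a b) n m ↔ KTyp Γ a n m ∧ KTyp Γ b n m :=
  ⟨fun h => by cases h with | add h1 h2 => exact ⟨h1, h2⟩, fun ⟨h1, h2⟩ => .add h1 h2⟩

theorem KTyp.star_iff {X T : Type} {Γ : X → T × T} {a : KTerm X} {n m : T} :
    KTyp Γ (.star a) n m ↔ n = m ∧ KTyp Γ a n n :=
  ⟨fun h => by cases h with | star h1 => exact ⟨rfl, h1⟩, fun ⟨e, h1⟩ => e ▸ .star h1⟩

theorem KTyp.one_iff {X T : Type} {Γ : X → T × T} {n m : T} :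
    KTyp Γ .one n m ↔ n = m :=
  ⟨fun h => by cases h; rfl, fun e => e ▸ .one n⟩

theorem KEqS.preserves {X T U : Type} (Γ : X → T × T) (Δ : X → U × U) {a b : KTerm X} {u v : U}
    (h : KEqS Δ a b u v) : ∀ n m : T, KTyp Γ a n m ↔ KTyp Γ b n m := by
  induction h with
  | var | one | zero => intro n m; exact Iff.rfl
  | symm _ ih => intro n m; exact (ih n m).symm
  | trans _ _ ih1 ih2 => intro n m; exact (ih1 n m).trans (ih2 n m)
  | mul _ _ ih1 ih2 => intro n m; simp only [KTyp.mul_iff, ih1, ih2]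
  | add _ _ ih1 ih2 => intro n m; simp only [KTyp.add_iff, ih1, ih2]
  | star _ ih => intro n m; simp only [KTyp.star_iff, ih]
  | one_mul _ => intro n m; simp [KTyp.mul_iff, KTyp.one_iff]
  | mul_one _ => intro n m; simp [KTyp.mul_iff, KTyp.one_iff]
  | mul_assoc _ _ _ =>
    intro n m
    simp only [KTyp.mul_iff]
    constructor
    · rintro ⟨k, ⟨l, h1, h2⟩, h3⟩
      exact ⟨l, h1, k, h2, h3⟩
    · rintro ⟨l, h1, k, h2, h3⟩
      exact ⟨k, ⟨l, h1, h2⟩, h3⟩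
  | add_zero _ => intro n m; simp [KTyp.add_iff, KTyp.zero]
  | add_comm _ _ => intro n m; simp only [KTyp.add_iff, and_comm]
  | add_assoc _ _ _ => intro n m; simp only [KTyp.add_iff, and_assoc]
  | mul_add _ _ _ hs =>
    intro n m
    simp only [KTyp.mul_iff, KTyp.add_iff]
    constructor
    · rintro ⟨k, h1, h2, h3⟩
      exact ⟨⟨k, h1, h2⟩, k, h1, h3⟩
    · rintro ⟨⟨k, h1, h2⟩, l, h3, h4⟩
      obtain rfl := (h1.strict_inj h3 hs).1 rfl
      exact ⟨k, h1, h2, h4⟩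
  | add_mul _ _ _ hs =>
    intro n m
    simp only [KTyp.mul_iff, KTyp.add_iff]
    constructor
    · rintro ⟨k, ⟨h1, h2⟩, h3⟩
      exact ⟨⟨k, h1, h3⟩, k, h2, h3⟩
    · rintro ⟨⟨k, h1, h2⟩, l, h3, h4⟩
      obtain rfl := (h2.strict_inj h4 hs).2 rfl
      exact ⟨k, ⟨h1, h3⟩, h2⟩
  | add_idem _ => intro n m; simp only [KTyp.add_iff, and_self]
  | star_unfold _ =>
    intro n m
    simp only [KTyp.mul_iff, KTyp.add_iff, KTyp.star_iff, KTyp.one_iff]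
    constructor
    · rintro ⟨rfl, k, h1, rfl, h2⟩
      exact ⟨rfl, h1⟩
    · rintro ⟨rfl, h1⟩
      exact ⟨rfl, n, h1, rfl, h1⟩
  | star_ind_l _ hs ih =>
    intro n m
    simp only [KTyp.mul_iff, KTyp.add_iff, KTyp.star_iff] at ih ⊢
    refine ⟨fun h => h.2, fun h => ⟨?_, h⟩⟩
    obtain ⟨⟨k, h1, h2⟩, _⟩ := (ih n m).2 h
    obtain rfl := (h.strict_inj h2 hs).2 rfl
    exact ⟨n, ⟨rfl, h1⟩, h⟩
  | star_ind_r _ hs ih =>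
    intro n m
    simp only [KTyp.mul_iff, KTyp.add_iff, KTyp.star_iff] at ih ⊢
    refine ⟨fun h => h.2, fun h => ⟨?_, h⟩⟩
    obtain ⟨⟨k, h1, h2⟩, _⟩ := (ih n m).2 h
    obtain rfl := (h.strict_inj h1 hs).1 rfl
    exact ⟨m, h, rfl, h2⟩

/-- In typed Kleene algebras, if the untyped strict equality `⊢ a =⁺ b` is derivable
(i.e. the strict equality over the singleton set of objects), then for all objects
`n,m`, `a : n→m` is derivable iff `b : n→m` is derivable. -/
theorem kleene_strict_eq_preserves_types {X T : Type} (Γ : X → T × T)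
    (a b : KTerm X) :
    KEqS (fun _ : X => ((), ())) a b () () →
    ∀ n m : T, KTyp Γ a n m ↔ KTyp Γ b n m := by
  exact fun h => KEqS.preserves Γ _ h
end
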